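/- arXiv:2601.02762 — 2 statements merged into one kernel-verified Lean document; each statement's English description precedes it below -/
import Mathlib

section
/- Let L be a symmetric positive-definite n×n real matrix whose smallest eigenvalue is ℓ > 0, let w : ℝ → ℝⁿ be continuous with ‖w(t)‖ ≤ D for all t ≥ 0, and let y : ℝ → ℝⁿ be differentiable with y'(t) = −L y(t) − w(t) for all t ≥ 0. Then for all t ≥ 0, ‖y(t)‖ ≤ e^{−ℓ t} ‖y(0)‖ + (D/ℓ)(1 − e^{−ℓ t}). -/
open Matrix

/-!
By the spectral theorem the quadratic form of `L` is at least `ℓ ‖v‖²`, so along a solution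
`⟪y, y'⟫ ≤ -ℓ ‖y‖² + D ‖y‖`, that is, `‖y‖' ≤ -ℓ ‖y‖ + D` wherever `y ≠ 0`. Unlike Grönwall's
inequality for a bound on `‖y'‖`, this one-sided bound allows a negative rate. Zeros of `y`, where
the norm is not differentiable, cause no trouble: comparing `‖y‖²` with the square of a positive
supersolution, only points where the two agree have to be examined.
-/

open scoped MatrixOrder in
theorem mul_norm_sq_le_re_inner_toEuclideanLin {𝕜 ι : Type*} [RCLike 𝕜] [Fintype ι]
    [DecidableEq ι] {A : Matrix ι ι 𝕜} (hA : A.IsHermitian) {c : ℝ}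
    (hc : ∀ i, c ≤ hA.eigenvalues i) (v : EuclideanSpace 𝕜 ι) :
    c * ‖v‖ ^ 2 ≤ RCLike.re (inner 𝕜 v (toEuclideanLin A v)) := by
  have hle : algebraMap ℝ (Matrix ι ι 𝕜) c ≤ A := by
    refine algebraMap_le_of_le_spectrum (fun μ hμ => ?_) hA.isSelfAdjoint
    obtain ⟨i, rfl⟩ := hA.spectrum_real_eq_range_eigenvalues ▸ hμ
    exact hc i
  have hscalar : toEuclideanLin (algebraMap ℝ (Matrix ι ι 𝕜) c) v = (c : 𝕜) • v := by
    ext j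
    simp [Matrix.algebraMap_eq_diagonal, mulVec_diagonal, Algebra.smul_def]
  have hpos := (isPositive_toEuclideanLin_iff.mpr (le_iff.mp hle)).re_inner_nonneg_right v
  rwa [map_sub, LinearMap.sub_apply, inner_sub_right, map_sub, hscalar, inner_smul_right,
    RCLike.re_ofReal_mul, inner_self_eq_norm_sq, sub_nonneg] at hpos

theorem gronwallBound_pos {δ K ε x : ℝ} (hδ : 0 < δ) (hε : 0 ≤ ε) (hx : 0 ≤ x) :
    0 < gronwallBound δ K ε x := by
  rcases lt_trichotomy K 0 with hK | rfl | hK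
  · have hexp : Real.exp (K * x) ≤ 1 :=
      Real.exp_le_one_iff.mpr (mul_nonpos_of_nonpos_of_nonneg hK.le hx)
    rw [gronwallBound_of_K_ne_0 hK.ne]
    exact add_pos_of_pos_of_nonneg (by positivity) (mul_nonneg_of_nonpos_of_nonpos
      (div_nonpos_of_nonneg_of_nonpos hε hK.le) (sub_nonpos.mpr hexp))
  · rw [gronwallBound_K0]
    positivity
  · have hexp : 1 ≤ Real.exp (K * x) := Real.one_le_exp (by positivity)
    rw [gronwallBound_of_K_ne_0 hK.ne']
    exact add_pos_of_pos_of_nonneg (by positivity) (mul_nonneg (by positivity)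
      (sub_nonneg.mpr hexp))

section InnerProductSpace

variable {E : Type*} [NormedAddCommGroup E] [InnerProductSpace ℝ E]

theorem norm_le_gronwallBound_of_inner_deriv_right_lt {f f' : ℝ → E} {δ K ε a b : ℝ}
    (hδ : 0 < δ) (hε : 0 ≤ ε) (hf : ContinuousOn f (Set.Icc a b))
    (hf' : ∀ x ∈ Set.Ico a b, HasDerivWithinAt f (f' x) (Set.Ici x) x) (ha : ‖f a‖ ≤ δ)
    (bound : ∀ x ∈ Set.Ico a b, f x ≠ 0 → inner ℝ (f x) (f' x) < K * ‖f x‖ ^ 2 + ε * ‖f x‖) :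
    ∀ x ∈ Set.Icc a b, ‖f x‖ ≤ gronwallBound δ K ε (x - a) := by
  intro x hx
  set B : ℝ → ℝ := fun t => gronwallBound δ K ε (t - a) with hB
  have hBpos (t : ℝ) (ht : a ≤ t) : 0 < B t := gronwallBound_pos hδ hε (sub_nonneg.mpr ht)
  have hBderiv (t : ℝ) : HasDerivAt (B ^ 2) (2 * B t * (K * B t + ε)) t := by
    simpa using (hasDerivAt_gronwallBound_shift δ K ε t a).pow 2
  have hstart : ‖f a‖ ^ 2 ≤ (B ^ 2) a := by
    simpa [hB, gronwallBound_x0] using pow_le_pow_left₀ (norm_nonneg _) ha 2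
  refine le_of_sq_le_sq ?_ (hBpos x hx.1).le
  refine image_le_of_deriv_right_lt_deriv_boundary' (hf.norm.pow 2)
    (fun t ht => (hf' t ht).norm_sq) hstart (fun t _ => (hBderiv t).continuousAt.continuousWithinAt)
    (fun t _ => (hBderiv t).hasDerivWithinAt) (fun t ht htouch => ?_) hx
  have hnorm : ‖f t‖ = B t :=
    (pow_left_inj₀ (norm_nonneg _) (hBpos t ht.1).le two_ne_zero).mp htouch
  have hlt := bound t ht (norm_pos_iff.mp (hnorm ▸ hBpos t ht.1))
  rw [hnorm] at hlt
  linear_combination 2 * hlt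

theorem norm_le_gronwallBound_of_inner_deriv_right_le {f f' : ℝ → E} {δ K ε a b : ℝ}
    (hε : 0 ≤ ε) (hf : ContinuousOn f (Set.Icc a b))
    (hf' : ∀ x ∈ Set.Ico a b, HasDerivWithinAt f (f' x) (Set.Ici x) x) (ha : ‖f a‖ ≤ δ)
    (bound : ∀ x ∈ Set.Ico a b, inner ℝ (f x) (f' x) ≤ K * ‖f x‖ ^ 2 + ε * ‖f x‖) :
    ∀ x ∈ Set.Icc a b, ‖f x‖ ≤ gronwallBound δ K ε (x - a) := by
  intro x hx
  have hstrict (η : ℝ) (hη : 0 < η) : ‖f x‖ ≤ gronwallBound (δ + η) K (ε + η) (x - a) := by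
    refine norm_le_gronwallBound_of_inner_deriv_right_lt
      (add_pos_of_nonneg_of_pos ((norm_nonneg _).trans ha) hη) (by positivity) hf hf'
      (by linarith) (fun t ht hft => ?_) x hx
    have hgap : 0 < η * ‖f t‖ := by positivity
    linear_combination bound t ht + hgap
  have hcont : Continuous fun η => gronwallBound (δ + η) K (ε + η) (x - a) := by
    unfold gronwallBound
    split_ifs <;> fun_prop
  simpa only [add_zero] using ge_of_tendsto (hcont.continuousWithinAt (s := Set.Ioi 0) (x := 0))
    (Filter.eventually_of_mem self_mem_nhdsWithin hstrict)

theorem perturbed_linear_ode_norm_bound_general {A : ℝ → E → E} {w y : ℝ → E} {ℓ D : ℝ}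
    (hℓ : ℓ ≠ 0) (hA : ∀ t, 0 ≤ t → ∀ v, ℓ * ‖v‖ ^ 2 ≤ inner ℝ v (A t v))
    (hD : ∀ t, 0 ≤ t → ‖w t‖ ≤ D)
    (hy : ∀ t, 0 ≤ t → HasDerivWithinAt y (-A t (y t) - w t) (Set.Ici 0) t) :
    ∀ t, 0 ≤ t → ‖y t‖ ≤
      Real.exp (-ℓ * t) * ‖y 0‖ + (D / ℓ) * (1 - Real.exp (-ℓ * t)) := by
  intro t ht
  have hdissipative (s : ℝ) (hs : 0 ≤ s) :
      inner ℝ (y s) (-A s (y s) - w s) ≤ -ℓ * ‖y s‖ ^ 2 + D * ‖y s‖ := by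
    have hw : -inner ℝ (y s) (w s) ≤ D * ‖y s‖ :=
      calc -inner ℝ (y s) (w s) ≤ ‖y s‖ * ‖w s‖ :=
            (neg_le_abs _).trans (abs_real_inner_le_norm _ _)
        _ ≤ ‖y s‖ * D := by gcongr; exact hD s hs
        _ = D * ‖y s‖ := mul_comm _ _
    rw [inner_sub_right, inner_neg_right]
    linear_combination hA s hs (y s) + hw
  have hgronwall := norm_le_gronwallBound_of_inner_deriv_right_le
    ((norm_nonneg _).trans (hD 0 le_rfl))
    (fun s hs => (hy s hs.1).continuousWithinAt.mono Set.Icc_subset_Ici_self)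
    (fun s hs => (hy s hs.1).mono (Set.Ici_subset_Ici.mpr hs.1)) le_rfl
    (fun s hs => hdissipative s hs.1) t ⟨ht, le_rfl⟩
  rw [gronwallBound_of_K_ne_0 (neg_ne_zero.mpr hℓ)] at hgronwall
  simp only [sub_zero, div_neg] at hgronwall
  linear_combination hgronwall

end InnerProductSpace

/-- Analytic core of the paper's Theorem 1: for the perturbed linear ODE
`y' = −L y − w` with `L` symmetric positive definite with smallest eigenvalue
`ℓ > 0` and `‖w(t)‖ ≤ D` for `t ≥ 0`, one has
`‖y(t)‖ ≤ e^{−ℓ t}‖y(0)‖ + (D/ℓ)(1 − e^{−ℓ t})` for all `t ≥ 0`. -/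
theorem perturbed_linear_ode_norm_bound
    {n : ℕ} (L : Matrix (Fin n) (Fin n) ℝ)
    (hLsymm : L.IsSymm) (hLpd : L.PosDef)
    (ℓ : ℝ) (hℓ : 0 < ℓ)
    (hmin : IsLeast (Set.range hLpd.isHermitian.eigenvalues) ℓ)
    (w y : ℝ → EuclideanSpace ℝ (Fin n))
    (hw : Continuous w)
    (D : ℝ) (hD : ∀ t, 0 ≤ t → ‖w t‖ ≤ D)
    (hy : ∀ t, 0 ≤ t →
      HasDerivAt y (-(Matrix.toEuclideanLin L (y t)) - w t) t) :
    ∀ t, 0 ≤ t → ‖y t‖ ≤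
      Real.exp (-ℓ * t) * ‖y 0‖ + (D / ℓ) * (1 - Real.exp (-ℓ * t)) :=
  perturbed_linear_ode_norm_bound_general hℓ.ne'
    (fun _ _ => mul_norm_sq_le_re_inner_toEuclideanLin hLpd.isHermitian fun i => hmin.2 ⟨i, rfl⟩)
    hD fun t ht => (hy t ht).hasDerivWithinAt
end

section
/- Let a > 0 and c ≥ 0, and let V : [0,∞) → ℝ be differentiable and nonnegative with V'(t) ≤ −2a V(t) + 2c √(V(t)) for all t ≥ 0. Then for all t ≥ 0, √(V(t)) ≤ e^{−a t} √(V(0)) + (c/a)(1 − e^{−a t}). -/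
/-!
For `η > 0` the regularized root `u = √(V + η²)` is differentiable even where `V` vanishes.
Dividing `V' ≤ 2KV + 2ε√V` by `2u` and using `√V ≤ u` and `η ≤ u` yields the linear inequality
`u' ≤ Ku + (ε + |K|η)`, to which Grönwall's inequality applies; then let `η → 0⁺`.
-/

open Set Filter Topology

theorem gronwallBound_continuous_δ_ε (K x : ℝ) :
    Continuous fun p : ℝ × ℝ => gronwallBound p.1 K p.2 x := by
  rcases eq_or_ne K 0 with rfl | hK
  · simp only [gronwallBound_K0]
    fun_prop
  · simp only [gronwallBound_of_K_ne_0 hK]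
    fun_prop

theorem gronwallBound_neg {a : ℝ} (ha : a ≠ 0) (δ ε x : ℝ) :
    gronwallBound δ (-a) ε x =
      Real.exp (-a * x) * δ + ε / a * (1 - Real.exp (-a * x)) := by
  rw [gronwallBound_of_K_ne_0 (neg_ne_zero.2 ha), div_neg]
  ring

theorem div_two_mul_sqrt_add_sq_le {K ε v η : ℝ} (hε : 0 ≤ ε) (hv : 0 ≤ v) (hη : 0 < η) :
    (2 * K * v + 2 * ε * √v) / (2 * √(v + η ^ 2)) ≤ K * √(v + η ^ 2) + (ε + |K| * η) := by
  have hsq : √(v + η ^ 2) ^ 2 = v + η ^ 2 := Real.sq_sqrt (by positivity)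
  have hη_le : η ≤ √(v + η ^ 2) := Real.le_sqrt_of_sq_le (le_add_of_nonneg_left hv)
  have hv_le : √v ≤ √(v + η ^ 2) := Real.sqrt_le_sqrt (le_add_of_nonneg_right (sq_nonneg η))
  have hdefect : -K * η ^ 2 ≤ |K| * η * √(v + η ^ 2) :=
    calc -K * η ^ 2 ≤ |K| * η ^ 2 := by gcongr; exact neg_le_abs K
      _ = |K| * η * η := by ring
      _ ≤ |K| * η * √(v + η ^ 2) := by gcongr
  have hforcing : ε * √v ≤ ε * √(v + η ^ 2) := by gcongr
  rw [div_le_iff₀ (by positivity)]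
  linear_combination 2 * hdefect + 2 * hforcing - 2 * K * hsq

section SqrtComparison

variable {f f' : ℝ → ℝ} {δ K ε a b : ℝ}

theorem sqrt_add_sq_le_gronwallBound (hε : 0 ≤ ε) (hf : ContinuousOn f (Icc a b))
    (hf' : ∀ x ∈ Ico a b, HasDerivWithinAt f (f' x) (Ici x) x)
    (hf_nonneg : ∀ x ∈ Ico a b, 0 ≤ f x) (hδ : √(f a) ≤ δ)
    (bound : ∀ x ∈ Ico a b, f' x ≤ 2 * K * f x + 2 * ε * √(f x))
    {η : ℝ} (hη : 0 < η) {x : ℝ} (hx : x ∈ Icc a b) :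
    √(f x + η ^ 2) ≤ gronwallBound (δ + η) K (ε + |K| * η) (x - a) := by
  have hderiv : ∀ s ∈ Ico a b, HasDerivWithinAt (fun s => √(f s + η ^ 2))
      (f' s / (2 * √(f s + η ^ 2))) (Ici s) s := fun s hs =>
    ((hf' s hs).add_const (η ^ 2)).sqrt
      (add_pos_of_nonneg_of_pos (hf_nonneg s hs) (by positivity)).ne'
  have hinit : √(f a + η ^ 2) ≤ δ + η := by
    obtain ⟨hδ_nonneg, hfa⟩ := Real.sqrt_le_iff.1 hδ
    refine Real.sqrt_le_iff.2 ⟨add_nonneg hδ_nonneg hη.le, ?_⟩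
    calc f a + η ^ 2 ≤ δ ^ 2 + η ^ 2 := by gcongr
      _ ≤ (δ + η) ^ 2 := pow_add_pow_le hδ_nonneg hη.le two_ne_zero
  refine le_gronwallBound_of_liminf_deriv_right_le (hf.add continuousOn_const).sqrt
    (fun s hs _ hr => (hderiv s hs).liminf_right_slope_le hr) hinit (fun s hs => ?_) x hx
  calc f' s / (2 * √(f s + η ^ 2))
      ≤ (2 * K * f s + 2 * ε * √(f s)) / (2 * √(f s + η ^ 2)) := by
        gcongr
        exact bound s hs
    _ ≤ K * √(f s + η ^ 2) + (ε + |K| * η) :=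
        div_two_mul_sqrt_add_sq_le hε (hf_nonneg s hs) hη

theorem sqrt_comparison_lemma_general (hε : 0 ≤ ε) (hf : ContinuousOn f (Icc a b))
    (hf' : ∀ x ∈ Ico a b, HasDerivWithinAt f (f' x) (Ici x) x)
    (hf_nonneg : ∀ x ∈ Ico a b, 0 ≤ f x) (hδ : √(f a) ≤ δ)
    (bound : ∀ x ∈ Ico a b, f' x ≤ 2 * K * f x + 2 * ε * √(f x)) :
    ∀ x ∈ Icc a b, √(f x) ≤ gronwallBound δ K ε (x - a) := by
  intro x hx
  have hlim : Tendsto (fun η => gronwallBound (δ + η) K (ε + |K| * η) (x - a)) (𝓝[>] 0)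
      (𝓝 (gronwallBound δ K ε (x - a))) := by
    have hcont : Continuous fun η => gronwallBound (δ + η) K (ε + |K| * η) (x - a) :=
      (gronwallBound_continuous_δ_ε K (x - a)).comp
        (f := fun η => (δ + η, ε + |K| * η)) (by fun_prop)
    simpa only [mul_zero, add_zero] using (hcont.tendsto 0).mono_left nhdsWithin_le_nhds
  refine ge_of_tendsto hlim ?_
  filter_upwards [self_mem_nhdsWithin] with η hη
  calc √(f x) ≤ √(f x + η ^ 2) := Real.sqrt_le_sqrt (le_add_of_nonneg_right (sq_nonneg η))
    _ ≤ gronwallBound (δ + η) K (ε + |K| * η) (x - a) :=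
        sqrt_add_sq_le_gronwallBound hε hf hf' hf_nonneg hδ bound hη hx

end SqrtComparison

/-- Square-root comparison lemma used in the proofs of the paper's Theorems 1
and 2: if `V ≥ 0` is differentiable on `[0,∞)` with
`V' ≤ −2a V + 2c √V` (`a > 0`, `c ≥ 0`), then
`√(V(t)) ≤ e^{−a t} √(V(0)) + (c/a)(1 − e^{−a t})` for all `t ≥ 0`. -/
theorem sqrt_comparison_lemma
    (a c : ℝ) (ha : 0 < a) (hc : 0 ≤ c)
    (V V' : ℝ → ℝ)
    (hV : ∀ t, 0 ≤ t → HasDerivAt V (V' t) t)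
    (hVnonneg : ∀ t, 0 ≤ t → 0 ≤ V t)
    (hV' : ∀ t, 0 ≤ t → V' t ≤ -2 * a * V t + 2 * c * Real.sqrt (V t)) :
    ∀ t, 0 ≤ t → Real.sqrt (V t) ≤
      Real.exp (-a * t) * Real.sqrt (V 0) + (c / a) * (1 - Real.exp (-a * t)) := by
  intro t ht
  simpa only [sub_zero, gronwallBound_neg ha.ne'] using
    sqrt_comparison_lemma_general hc (K := -a)
      (fun s hs => (hV s hs.1).continuousAt.continuousWithinAt)
      (fun s hs => (hV s hs.1).hasDerivWithinAt) (fun s hs => hVnonneg s hs.1) le_rfl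
      (fun s hs => (hV' s hs.1).trans_eq (by ring)) t (right_mem_Icc.2 ht)
end
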